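/- Let n ≥ 1 be an integer, ρ ≥ 0, and let z ∈ ℝⁿ with mean z̄_n and sample variance s_n² satisfying s_n² > 0 and s_n² ≥ (2ρ/n)·(max_i z_i − z̄_n)². Define p* ∈ ℝⁿ by p*_i = (1/n)·(1 − √(2ρ/(n s_n²))·(z_i − z̄_n)). Then p* ∈ P_{ρ,n}, p* is the unique minimizer of p ↦ ∑_{i=1}^n p_i z_i over P_{ρ,n}, and ∑_{i=1}^n p*_i z_i = z̄_n − √(2ρ s_n²/n). -/

import Mathlib

/-- The χ² uncertainty set `P_{ρ,n}`. -/
def chiSqBall (n : ℕ) (ρ : ℝ) : Set (Fin n → ℝ) :=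
  {p | (∀ i, 0 ≤ p i) ∧ (∑ i, p i = 1) ∧ (1/2) * ∑ i, ((n : ℝ) * p i - 1)^2 ≤ ρ}

/-- Mean of a vector. -/
noncomputable def vecMean {n : ℕ} (z : Fin n → ℝ) : ℝ := (∑ i, z i) / n

/-- Biased sample variance of a vector. -/
noncomputable def vecVar {n : ℕ} (z : Fin n → ℝ) : ℝ := (∑ i, (z i - vecMean z)^2) / n

/-- `OPT = inf_{p ∈ P_{ρ,n}} ∑ p_i z_i`. -/
noncomputable def droOPT (n : ℕ) (ρ : ℝ) (z : Fin n → ℝ) : ℝ :=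
  sInf ((fun p => ∑ i, p i * z i) '' chiSqBall n ρ)

/-!
Write `u q i = n * q i - 1` and `v i = z i - vecMean z`. Since `∑ i, v i = 0`, a probability vector
`q` satisfies `n * (∑ i, q i * z i - vecMean z) = ⟪u q, v⟫`, and the divergence constraint reads
`‖u q‖ ^ 2 ≤ 2 * ρ`. So the problem is to minimize a linear form on a ball, and by the equality
case of Cauchy–Schwarz the only solution is the boundary point opposite to `v`. The variance
condition is what keeps the corresponding weights nonnegative.
-/

open Real

lemma eq_of_sum_sq_le_of_sum_sq_le_sum_mul {ι R : Type*} [Fintype ι] [CommRing R] [LinearOrder R]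
    [IsStrictOrderedRing R] {f g : ι → R} (hfg : ∑ i, f i ^ 2 ≤ ∑ i, g i ^ 2)
    (hg : ∑ i, g i ^ 2 ≤ ∑ i, f i * g i) : f = g := by
  have expand : ∑ i, (f i - g i) ^ 2 = ∑ i, f i ^ 2 - 2 * ∑ i, f i * g i + ∑ i, g i ^ 2 := by
    simp only [sub_sq, Finset.sum_add_distrib, Finset.sum_sub_distrib, Finset.mul_sum, mul_assoc]
  have sum_eq_zero : ∑ i, (f i - g i) ^ 2 = 0 :=
    le_antisymm (by linarith) (Finset.sum_nonneg fun i _ => sq_nonneg _)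
  rw [Finset.sum_eq_zero_iff_of_nonneg fun i _ => sq_nonneg _] at sum_eq_zero
  exact funext fun i => sub_eq_zero.1 (sq_eq_zero_iff.1 (sum_eq_zero i (Finset.mem_univ i)))

lemma sqrt_div_mul_le_one {a s x : ℝ} (hs : 0 ≤ s) (h : a * x ^ 2 ≤ s) : √(a / s) * x ≤ 1 :=
  calc √(a / s) * x ≤ √(a / s) * |x| := by gcongr; exact le_abs_self x
    _ = √(a * x ^ 2 / s) := by
      rw [← sqrt_sq_eq_abs, ← sqrt_mul' _ (sq_nonneg x), div_mul_eq_mul_div]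
    _ ≤ 1 := sqrt_le_one.2 (div_le_one_of_le₀ h hs)

lemma sqrt_div_mul_self {a s : ℝ} (hs : 0 < s) : √(a / s) * s = √(a * s) :=
  calc √(a / s) * s = √(a / s * s ^ 2) := by rw [sqrt_mul' _ (sq_nonneg s), sqrt_sq hs.le]
    _ = √(a * s) := by congr 1; field_simp

section Moments

variable {n : ℕ} (z : Fin n → ℝ)

lemma sum_sub_vecMean : ∑ i, (z i - vecMean z) = 0 := by
  rcases eq_or_ne n 0 with rfl | hn
  · simp
  · simp [vecMean, Finset.sum_sub_distrib, mul_div_cancel₀, hn]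

lemma sum_sq_sub_vecMean : ∑ i, (z i - vecMean z) ^ 2 = n * vecVar z := by
  rcases eq_or_ne n 0 with rfl | hn
  · simp
  · simp [vecVar, mul_div_cancel₀, hn]

lemma sum_card_mul_sub_one_mul_sub_vecMean {q : Fin n → ℝ} (hq : ∑ i, q i = 1) :
    ∑ i, (n * q i - 1) * (z i - vecMean z) = n * (∑ i, q i * z i - vecMean z) :=
  calc ∑ i, (n * q i - 1) * (z i - vecMean z)
      = ∑ i, (n * (q i * z i) - n * vecMean z * q i - (z i - vecMean z)) :=
        Finset.sum_congr rfl fun i _ => by ring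
    _ = n * (∑ i, q i * z i - vecMean z) := by
      rw [Finset.sum_sub_distrib, sum_sub_vecMean, Finset.sum_sub_distrib, ← Finset.mul_sum,
        ← Finset.mul_sum, hq]
      ring

end Moments

/-- The uniform weights on `Fin n` tilted linearly against `z` with strength `t`. The `p*` of the
theorem is the case `t = √(2ρ / (n s²))`. -/
noncomputable def tiltedWeights {n : ℕ} (t : ℝ) (z : Fin n → ℝ) (i : Fin n) : ℝ :=
  1 / n * (1 - t * (z i - vecMean z))

namespace tiltedWeights

variable {n : ℕ} {t ρ : ℝ} {z q : Fin n → ℝ}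

lemma card_mul_sub_one (i : Fin n) : n * tiltedWeights t z i - 1 = -t * (z i - vecMean z) := by
  have hn : (n : ℝ) ≠ 0 := Nat.cast_ne_zero.2 i.pos.ne'
  rw [tiltedWeights]
  field_simp
  ring

lemma sum_eq_one [NeZero n] : ∑ i, tiltedWeights t z i = 1 := by
  have hn : (n : ℝ) ≠ 0 := NeZero.ne _
  calc ∑ i, tiltedWeights t z i = 1 / n * (∑ _ : Fin n, 1 - t * ∑ i, (z i - vecMean z)) := by
        simp only [tiltedWeights, Finset.mul_sum, Finset.sum_sub_distrib, mul_sub, mul_one]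
    _ = 1 := by rw [sum_sub_vecMean]; simp [hn]

lemma sum_sq_card_mul_sub_one :
    ∑ i, (n * tiltedWeights t z i - 1) ^ 2 = t ^ 2 * (n * vecVar z) := by
  simp only [card_mul_sub_one, mul_pow, neg_sq, ← Finset.mul_sum, sum_sq_sub_vecMean]

lemma sum_mul_eq [NeZero n] : ∑ i, tiltedWeights t z i * z i = vecMean z - t * vecVar z := by
  have hn : (n : ℝ) ≠ 0 := NeZero.ne _
  have h := sum_card_mul_sub_one_mul_sub_vecMean z (sum_eq_one (t := t) (z := z))
  simp only [card_mul_sub_one, mul_assoc, ← sq, ← Finset.mul_sum, sum_sq_sub_vecMean] at h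
  apply mul_left_cancel₀ hn
  linarith

lemma mem_chiSqBall [NeZero n] (hpos : ∀ i, t * (z i - vecMean z) ≤ 1)
    (hρ : t ^ 2 * (n * vecVar z) ≤ 2 * ρ) : tiltedWeights t z ∈ chiSqBall n ρ := by
  refine ⟨fun i => mul_nonneg (by positivity) (sub_nonneg.2 (hpos i)), sum_eq_one, ?_⟩
  rw [sum_sq_card_mul_sub_one]
  linarith

lemma eq_of_sum_mul_le (ht : 0 ≤ t) (hρ : 2 * ρ ≤ t ^ 2 * (n * vecVar z))
    (hq : q ∈ chiSqBall n ρ) (hle : ∑ i, q i * z i ≤ ∑ i, tiltedWeights t z i * z i) :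
    q = tiltedWeights t z := by
  rcases eq_zero_or_neZero n with rfl | _
  · exact Subsingleton.elim _ _
  obtain ⟨-, hq_sum, hq_div⟩ := hq
  have deviation_eq : (fun i => n * q i - 1) = fun i => n * tiltedWeights t z i - 1 := by
    apply eq_of_sum_sq_le_of_sum_sq_le_sum_mul
    · rw [sum_sq_card_mul_sub_one]
      linarith
    · calc ∑ i, (n * tiltedWeights t z i - 1) ^ 2
          = t * n * (t * vecVar z) := by rw [sum_sq_card_mul_sub_one]; ring
        _ ≤ t * n * (vecMean z - ∑ i, q i * z i) := by
          rw [sum_mul_eq] at hle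
          gcongr
          linarith
        _ = -t * ∑ i, (n * q i - 1) * (z i - vecMean z) := by
          rw [sum_card_mul_sub_one_mul_sub_vecMean z hq_sum]; ring
        _ = ∑ i, (n * q i - 1) * (n * tiltedWeights t z i - 1) := by
          simp only [card_mul_sub_one, Finset.mul_sum, mul_left_comm]
  funext i
  simpa [NeZero.ne n] using congrFun deviation_eq i

end tiltedWeights

theorem stmt2 (n : ℕ) (hn : 1 ≤ n) (ρ : ℝ) (hρ : 0 ≤ ρ) (z : Fin n → ℝ)
    (hs : 0 < vecVar z)
    (hvar : (2 * ρ / n) * ((Finset.univ.sup' ⟨⟨0, hn⟩, Finset.mem_univ _⟩ z) - vecMean z)^2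
      ≤ vecVar z)
    (p : Fin n → ℝ)
    (hp : ∀ i, p i = (1/(n:ℝ)) * (1 - Real.sqrt (2 * ρ / (n * vecVar z)) * (z i - vecMean z))) :
    p ∈ chiSqBall n ρ ∧
      (∀ q ∈ chiSqBall n ρ, ∑ i, p i * z i ≤ ∑ i, q i * z i) ∧
      (∀ q ∈ chiSqBall n ρ, (∑ i, q i * z i = ∑ i, p i * z i) → q = p) ∧
      ∑ i, p i * z i = vecMean z - Real.sqrt (2 * ρ * vecVar z / n) := by
  have : NeZero n := ⟨Nat.one_le_iff_ne_zero.1 hn⟩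
  obtain rfl : p = tiltedWeights √(2 * ρ / (n * vecVar z)) z := funext hp
  set t := √(2 * ρ / (n * vecVar z)) with ht
  have radius_eq : t ^ 2 * (n * vecVar z) = 2 * ρ := by
    rw [sq_sqrt (by positivity), div_mul_cancel₀ _ (by positivity)]
  have tilt_le_one (i : Fin n) : t * (z i - vecMean z) ≤ 1 :=
    calc t * (z i - vecMean z)
        ≤ t * (Finset.univ.sup' ⟨⟨0, hn⟩, Finset.mem_univ _⟩ z - vecMean z) := by
          gcongr; exact Finset.le_sup' z (Finset.mem_univ i)
      _ ≤ 1 := by rw [ht, ← div_div]; exact sqrt_div_mul_le_one hs.le hvar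
  have value_eq : t * vecVar z = √(2 * ρ * vecVar z / n) := by
    rw [ht, ← div_div, sqrt_div_mul_self hs, div_mul_eq_mul_div]
  have eq_of_le {q} (hq : q ∈ chiSqBall n ρ) :=
    tiltedWeights.eq_of_sum_mul_le (sqrt_nonneg _) radius_eq.ge hq
  exact ⟨tiltedWeights.mem_chiSqBall tilt_le_one radius_eq.le,
    fun q hq => (le_total _ _).elim id fun h => by rw [eq_of_le hq h],
    fun q hq h => eq_of_le hq h.le,
    value_eq ▸ tiltedWeights.sum_mul_eq⟩
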